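/- arXiv:1803.05882 — 5 statements merged into one kernel-verified Lean document; each statement's English description precedes it below -/
import Mathlib

section
/- Let f be an ℝ-linear isometric equivalence of ℍ onto itself with f(1) = 1 and with determinant (as an ℝ-linear endomorphism of ℍ) equal to 1. Then there exists a unit quaternion u such that f(x) = u * x * u⁻¹ for all x ∈ ℍ. (Equivalently, the homomorphism ψ : S³ → SO(3) given by conjugation is surjective onto the rotations of the purely imaginary quaternions.) -/
/-!
A reflection in the hyperplane orthogonal to a unit quaternion `v` is `x ↦ -(v * star x * v)`, so
composing with it reverses the orientation and interchanges the maps `x ↦ p * x * q` and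
`x ↦ p * star x * q` with `p`, `q` unit quaternions. By the Cartan–Dieudonné theorem every linear
isometry of `ℍ` is a product of such reflections, hence has one of these two forms, the determinant
deciding which. If `p * x * q` fixes `1`, then `q = p⁻¹`.
-/

open scoped Quaternion RealInnerProductSpace

section InnerProductSpace

variable {𝕜 E : Type*} [RCLike 𝕜] [NormedAddCommGroup E] [InnerProductSpace 𝕜 E] {v : E}

theorem det_reflection_orthogonal_span_singleton [FiniteDimensional 𝕜 E] (hv : v ≠ 0) :
    LinearMap.det (𝕜 ∙ v)ᗮ.reflection.toLinearEquiv.toLinearMap = -1 := by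
  rw [Submodule.det_reflection, Submodule.orthogonal_orthogonal, finrank_span_singleton hv, pow_one]

theorem reflection_orthogonal_span_singleton_of_norm_eq_one (hv : ‖v‖ = 1) (x : E) :
    (𝕜 ∙ v)ᗮ.reflection x = x - (2 * inner 𝕜 v x) • v := by
  rw [Submodule.reflection_orthogonal_apply, Submodule.reflection_singleton_apply]
  simp [hv, two_smul, two_mul, add_smul]

end InnerProductSpace

theorem coe_two_mul_inner (a b : ℍ) : ((2 * ⟪a, b⟫ : ℝ) : ℍ) = a * star b + b * star a := by
  rw [Quaternion.inner_def, ← Quaternion.self_add_star', star_mul, star_star]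

theorem star_mul_self_of_norm_eq_one {v : ℍ} (hv : ‖v‖ = 1) : star v * v = 1 := by
  rw [Quaternion.star_mul_self, Quaternion.normSq_eq_norm_mul_self, hv, mul_one,
    Quaternion.coe_one]

theorem reflection_orthogonal_span_singleton_eq_neg_mul_star_mul {v : ℍ} (hv : ‖v‖ = 1) (x : ℍ) :
    (ℝ ∙ v)ᗮ.reflection x = -(v * star x * v) :=
  calc
    (ℝ ∙ v)ᗮ.reflection x = x - (v * star x + x * star v) * v := by
      rw [reflection_orthogonal_span_singleton_of_norm_eq_one hv,
        ← Quaternion.coe_mul_eq_smul, coe_two_mul_inner]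
    _ = -(v * star x * v) := by
      rw [add_mul, mul_assoc x, star_mul_self_of_norm_eq_one hv, mul_one, sub_add_cancel_right]

/-- The normal form of a linear isometry of `ℍ`: left and right multiplication by unit quaternions,
after a conjugation if the isometry is orientation-reversing. The determinant is part of the
predicate, since it tells the two forms apart. -/
def HasUnitMulForm (φ : ℍ ≃ₗᵢ[ℝ] ℍ) : Prop :=
  ∃ p q : ℍ, ‖p‖ = 1 ∧ ‖q‖ = 1 ∧
    ((LinearMap.det φ.toLinearEquiv.toLinearMap = 1 ∧ ∀ x, φ x = p * x * q) ∨
      (LinearMap.det φ.toLinearEquiv.toLinearMap = -1 ∧ ∀ x, φ x = p * star x * q))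

theorem hasUnitMulForm_one : HasUnitMulForm 1 :=
  ⟨1, 1, norm_one, norm_one, .inl ⟨LinearMap.det_id, fun x ↦ by simp⟩⟩

theorem HasUnitMulForm.reflection_mul_of_norm_eq_one {φ : ℍ ≃ₗᵢ[ℝ] ℍ}
    (hφ : HasUnitMulForm φ) {v : ℍ} (hv : ‖v‖ = 1) : HasUnitMulForm ((ℝ ∙ v)ᗮ.reflection * φ) := by
  obtain ⟨p, q, hp, hq, h⟩ := hφ
  have det_mul : LinearMap.det ((ℝ ∙ v)ᗮ.reflection * φ).toLinearEquiv.toLinearMap =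
      -LinearMap.det φ.toLinearEquiv.toLinearMap := by
    rw [← neg_one_mul,
      ← det_reflection_orthogonal_span_singleton (norm_ne_zero_iff.1 (hv.trans_ne one_ne_zero))]
    exact LinearMap.det_comp _ _
  have mul_apply (x : ℍ) : ((ℝ ∙ v)ᗮ.reflection * φ) x = -(v * star (φ x) * v) :=
    reflection_orthogonal_span_singleton_eq_neg_mul_star_mul hv (φ x)
  refine ⟨-(v * star q), star p * v, by simp [hv, hq], by simp [hv, hp], ?_⟩
  rcases h with ⟨hdet, hφ⟩ | ⟨hdet, hφ⟩
  · exact .inr ⟨by rw [det_mul, hdet], fun x ↦ by simp [mul_apply, hφ, mul_assoc]⟩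
  · exact .inl ⟨by rw [det_mul, hdet, neg_neg], fun x ↦ by simp [mul_apply, hφ, mul_assoc]⟩

theorem HasUnitMulForm.reflection_mul {φ : ℍ ≃ₗᵢ[ℝ] ℍ} (hφ : HasUnitMulForm φ) (v : ℍ) :
    HasUnitMulForm ((ℝ ∙ v)ᗮ.reflection * φ) := by
  rcases eq_or_ne v 0 with rfl | hv
  · have reflection_eq_one : (ℝ ∙ (0 : ℍ))ᗮ.reflection = 1 := by
      ext1 x
      exact Submodule.reflection_mem_subspace_eq_self (by simp)
    rwa [reflection_eq_one, one_mul]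
  · have hspan : ℝ ∙ (‖v‖⁻¹ • v) = ℝ ∙ v :=
      Submodule.span_singleton_smul_eq (inv_ne_zero (norm_ne_zero_iff.2 hv)).isUnit v
    have hnorm : ‖‖v‖⁻¹ • v‖ = 1 := norm_smul_inv_norm (𝕜 := ℝ) hv
    simpa only [hspan] using hφ.reflection_mul_of_norm_eq_one hnorm

theorem hasUnitMulForm (φ : ℍ ≃ₗᵢ[ℝ] ℍ) : HasUnitMulForm φ := by
  obtain ⟨l, -, rfl⟩ := φ.reflections_generate_dim
  induction l with
  | nil => exact hasUnitMulForm_one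
  | cons v l ih => exact ih.reflection_mul v

theorem exists_norm_eq_one_mul_mul_of_det_eq_one {φ : ℍ ≃ₗᵢ[ℝ] ℍ}
    (hdet : LinearMap.det φ.toLinearEquiv.toLinearMap = 1) :
    ∃ p q : ℍ, ‖p‖ = 1 ∧ ‖q‖ = 1 ∧ ∀ x, φ x = p * x * q := by
  obtain ⟨p, q, hp, hq, ⟨-, h⟩ | ⟨hdet', -⟩⟩ := hasUnitMulForm φ
  · exact ⟨p, q, hp, hq, h⟩
  · norm_num [hdet] at hdet'

/-- Every ℝ-linear isometric equivalence of `ℍ` fixing `1` and with determinant `1`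
is conjugation by a unit quaternion; i.e. `ψ : S³ → SO(3)` is surjective. -/
theorem conj_surjective_onto_rotations (f : Quaternion ℝ ≃ₗᵢ[ℝ] Quaternion ℝ)
    (hf1 : f 1 = 1) (hdet : LinearMap.det f.toLinearEquiv.toLinearMap = 1) :
    ∃ u : Quaternion ℝ, ‖u‖ = 1 ∧ ∀ x : Quaternion ℝ, f x = u * x * u⁻¹ := by
  obtain ⟨p, q, hp, -, hf⟩ := exists_norm_eq_one_mul_mul_of_det_eq_one hdet
  have hpq : p * q = 1 := by rw [← hf1, hf 1, mul_one]
  exact ⟨p, hp, fun x ↦ by rw [hf x, eq_inv_of_mul_eq_one_right hpq]⟩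
end

section
/- Let f be an ℝ-linear isometric equivalence of ℍ onto itself with determinant (as an ℝ-linear endomorphism of ℍ) equal to 1. Then there exist unit quaternions u₁ and u₂ such that f(x) = u₁ * x * u₂⁻¹ for all x ∈ ℍ. (Equivalently, the homomorphism φ : S³ × S³ → SO(4), φ(u₁,u₂)(x) = u₁ x u₂⁻¹, is surjective.) -/
/-!
Since `2⟪v, x⟫ = v * star x + x * star v`, the reflection of `ℍ` in the hyperplane orthogonal to
a unit quaternion `v` is `x ↦ -(v * star x * v)`. The conjugations cancel in the composite of two
reflections, which is therefore a two-sided multiplication by unit quaternions. By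
Cartan–Dieudonné every isometry is a product of reflections, and each reflection has determinant
`-1`, so an isometry of determinant `1` is a product of an even number of them.
-/

open Metric
open scoped Quaternion RealInnerProductSpace

section Reflection

variable {E : Type*} [NormedAddCommGroup E] [InnerProductSpace ℝ E]

/-- The reflection of a real inner product space in the hyperplane orthogonal to the unit
vector `v`. Bundling `v` in the unit sphere excludes `v = 0`, for which `(ℝ ∙ v)ᗮ.reflection` is
the identity. -/
noncomputable def hyperplaneReflection (v : sphere (0 : E) 1) : E ≃ₗᵢ[ℝ] E :=
  (ℝ ∙ (v : E))ᗮ.reflection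

theorem hyperplaneReflection_apply (v : sphere (0 : E) 1) (x : E) :
    hyperplaneReflection v x = x - (2 * ⟪(v : E), x⟫) • (v : E) := by
  rw [hyperplaneReflection, Submodule.reflection_orthogonal_apply,
    Submodule.reflection_singleton_apply]
  simp [mul_smul, two_smul]

theorem exists_hyperplaneReflection_eq {v : E} (hv : v ≠ 0) :
    ∃ u : sphere (0 : E) 1, hyperplaneReflection u = (ℝ ∙ v)ᗮ.reflection := by
  have norm_inv_ne_zero : ‖v‖⁻¹ ≠ 0 := inv_ne_zero (norm_ne_zero_iff.2 hv)
  refine ⟨⟨‖v‖⁻¹ • v, by simp [norm_smul, hv]⟩, ?_⟩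
  simp only [hyperplaneReflection, Submodule.span_singleton_smul_eq norm_inv_ne_zero.isUnit]

variable [FiniteDimensional ℝ E]

theorem det_hyperplaneReflection (v : sphere (0 : E) 1) :
    LinearMap.det (hyperplaneReflection v).toLinearMap = -1 := by
  rw [hyperplaneReflection, Submodule.det_reflection, Submodule.orthogonal_orthogonal,
    finrank_span_singleton (ne_zero_of_mem_unit_sphere v), pow_one]

theorem det_prod_hyperplaneReflection (l : List (sphere (0 : E) 1)) :
    LinearMap.det (l.map hyperplaneReflection).prod.toLinearMap = (-1) ^ l.length := by
  induction l with
  | nil => exact LinearMap.det_id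
  | cons v l ih =>
    rw [List.map_cons, List.prod_cons, List.length_cons, pow_succ', ← ih,
      ← det_hyperplaneReflection v]
    exact LinearMap.det_comp _ _

theorem exists_eq_prod_hyperplaneReflection (f : E ≃ₗᵢ[ℝ] E) :
    ∃ l : List (sphere (0 : E) 1), f = (l.map hyperplaneReflection).prod := by
  obtain ⟨l, -, rfl⟩ := f.reflections_generate_dim
  induction l with
  | nil => exact ⟨[], rfl⟩
  | cons v l ih =>
    obtain ⟨l', hl'⟩ := ih
    rw [List.map_cons, List.prod_cons, hl']
    obtain rfl | hv := eq_or_ne v 0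
    · exact ⟨l', by ext x; simp [Submodule.reflection_mem_subspace_eq_self]⟩
    · obtain ⟨u, hu⟩ := exists_hyperplaneReflection_eq hv
      exact ⟨u :: l', by rw [List.map_cons, List.prod_cons, hu]⟩

end Reflection

/-- The homomorphism `φ` sending a pair `(a, b)` of elements of norm `1` of a normed division
algebra to the isometry `x ↦ a * x * b⁻¹`; the inverse makes it multiplicative in `b`. -/
noncomputable def sphereMulLeftRight (𝕜 A : Type*) [NormedField 𝕜] [NormedDivisionRing A]
    [NormedAlgebra 𝕜 A] : sphere (0 : A) 1 × sphere (0 : A) 1 →* (A ≃ₗᵢ[𝕜] A) where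
  toFun p :=
    { toLinearEquiv := (unitSphereToUnits A p.1).mulLeftLinearEquiv 𝕜 A *
        (unitSphereToUnits A p.2)⁻¹.mulRightLinearEquiv 𝕜
      norm_map' x := by simp }
  map_one' := by ext; simp
  map_mul' p q := by ext; simp [mul_assoc]

@[simp]
theorem sphereMulLeftRight_apply {𝕜 A : Type*} [NormedField 𝕜] [NormedDivisionRing A]
    [NormedAlgebra 𝕜 A] (p : sphere (0 : A) 1 × sphere (0 : A) 1) (x : A) :
    sphereMulLeftRight 𝕜 A p x = p.1 * x * (p.2 : A)⁻¹ := by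
  simp [sphereMulLeftRight, mul_assoc]

theorem quaternion_two_mul_inner (a b : ℍ[ℝ]) :
    ((2 * ⟪a, b⟫ : ℝ) : ℍ[ℝ]) = a * star b + b * star a := by
  rw [Quaternion.inner_def, ← Quaternion.self_add_star', star_mul, star_star]

theorem quaternion_star_eq_inv_of_norm_eq_one {a : ℍ[ℝ]} (ha : ‖a‖ = 1) : star a = a⁻¹ := by
  simp [Quaternion.inv_def, Quaternion.normSq_eq_norm_mul_self, ha]

theorem hyperplaneReflection_quaternion_apply (v : sphere (0 : ℍ[ℝ]) 1) (x : ℍ[ℝ]) :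
    hyperplaneReflection v x = -(v * star x * v) := by
  have star_mul_self : star (v : ℍ[ℝ]) * v = 1 := by
    rw [quaternion_star_eq_inv_of_norm_eq_one (norm_eq_of_mem_sphere v),
      inv_mul_cancel₀ (ne_zero_of_mem_unit_sphere v)]
  calc
    hyperplaneReflection v x = x - (v * star x + x * star (v : ℍ[ℝ])) * v := by
      rw [hyperplaneReflection_apply, ← Quaternion.coe_mul_eq_smul, quaternion_two_mul_inner]
    _ = -(v * star x * v) := by
      rw [add_mul, mul_assoc x, star_mul_self, mul_one, sub_add_cancel_right]

theorem hyperplaneReflection_mul_hyperplaneReflection (v w : sphere (0 : ℍ[ℝ]) 1) :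
    hyperplaneReflection v * hyperplaneReflection w =
      sphereMulLeftRight ℝ ℍ[ℝ] (v * w⁻¹, v⁻¹ * w) := by
  ext1 x
  simp [hyperplaneReflection_quaternion_apply, mul_assoc,
    quaternion_star_eq_inv_of_norm_eq_one (norm_eq_of_mem_sphere w)]

theorem prod_hyperplaneReflection_mem_range_of_even :
    ∀ l : List (sphere (0 : ℍ[ℝ]) 1), Even l.length →
      (l.map hyperplaneReflection).prod ∈ (sphereMulLeftRight ℝ ℍ[ℝ]).range
  | [], _ => one_mem _
  | [_], h => absurd h (by simp)
  | v :: w :: l, h => by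
    have even_length : Even l.length := by simpa [Nat.even_add_one] using h
    rw [List.map_cons, List.map_cons, List.prod_cons, List.prod_cons, ← mul_assoc,
      hyperplaneReflection_mul_hyperplaneReflection]
    exact mul_mem ⟨_, rfl⟩ (prod_hyperplaneReflection_mem_range_of_even l even_length)

/-- Every ℝ-linear isometric equivalence of `ℍ` with determinant `1` is of the form
`x ↦ u₁ * x * u₂⁻¹` for unit quaternions `u₁, u₂`; i.e. `φ : S³ × S³ → SO(4)` is
surjective. -/
theorem phi_surjective_onto_SO4 (f : Quaternion ℝ ≃ₗᵢ[ℝ] Quaternion ℝ)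
    (hdet : LinearMap.det f.toLinearEquiv.toLinearMap = 1) :
    ∃ u₁ u₂ : Quaternion ℝ, ‖u₁‖ = 1 ∧ ‖u₂‖ = 1 ∧
      ∀ x : Quaternion ℝ, f x = u₁ * x * u₂⁻¹ := by
  obtain ⟨l, rfl⟩ := exists_eq_prod_hyperplaneReflection f
  have even_length : Even l.length := by
    rwa [det_prod_hyperplaneReflection, neg_one_pow_eq_one_iff_even (by norm_num)] at hdet
  obtain ⟨⟨u₁, u₂⟩, hu⟩ := prod_hyperplaneReflection_mem_range_of_even l even_length
  exact ⟨u₁, u₂, norm_eq_of_mem_sphere u₁, norm_eq_of_mem_sphere u₂, fun x => by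
    rw [← hu, sphereMulLeftRight_apply]⟩
end

section
/- Let u₁, u₂, v₁, v₂ be unit quaternions such that u₁ * x * u₂⁻¹ = v₁ * x * v₂⁻¹ for all quaternions x. Then u₁ * y * u₁⁻¹ = v₁ * y * v₁⁻¹ and u₂ * y * u₂⁻¹ = v₂ * y * v₂⁻¹ for all quaternions y. (This is the well-definedness underlying the unique homomorphism ϕ : SO(4) → SO(3) × SO(3) with ϕ ∘ φ = ψ × ψ.) -/
/-!
The map `φ x = u₁ x u₂⁻¹` determines both conjugations: the inner inverses cancel in
`φ y (φ 1)⁻¹ = u₁ y u₁⁻¹` and `(φ 1)⁻¹ φ y = u₂ y u₂⁻¹`.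
-/

section UnitConjugation

variable {M : Type*} [Monoid M]

theorem units_conj_eq_mul_inv_div (a b : Mˣ) (y : M) :
    a * y * ↑a⁻¹ = a * y * ↑b⁻¹ * ↑(a / b)⁻¹ := by
  rw [inv_div, div_eq_mul_inv, Units.val_mul, ← mul_assoc, Units.inv_mul_cancel_right]

theorem units_conj_eq_inv_div_mul (a b : Mˣ) (y : M) :
    b * y * ↑b⁻¹ = ↑(a / b)⁻¹ * (a * y * ↑b⁻¹) := by
  rw [inv_div, div_eq_mul_inv, Units.val_mul, mul_assoc (a : M), mul_assoc (b : M) ↑a⁻¹,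
    Units.inv_mul_cancel_left, mul_assoc]

theorem phi_factors_through_psi_general (u₁ u₂ v₁ v₂ : Mˣ)
    (h : ∀ x : M, u₁ * x * ↑u₂⁻¹ = v₁ * x * ↑v₂⁻¹) :
    (∀ y : M, u₁ * y * ↑u₁⁻¹ = v₁ * y * ↑v₁⁻¹) ∧
    (∀ y : M, u₂ * y * ↑u₂⁻¹ = v₂ * y * ↑v₂⁻¹) := by
  have div_eq : u₁ / u₂ = v₁ / v₂ :=
    Units.ext (by simpa only [mul_one, div_eq_mul_inv, Units.val_mul] using h 1)
  refine ⟨fun y ↦ ?_, fun y ↦ ?_⟩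
  · calc
      u₁ * y * ↑u₁⁻¹ = u₁ * y * ↑u₂⁻¹ * ↑(u₁ / u₂)⁻¹ := units_conj_eq_mul_inv_div u₁ u₂ y
      _ = v₁ * y * ↑v₂⁻¹ * ↑(v₁ / v₂)⁻¹ := by rw [h, div_eq]
      _ = v₁ * y * ↑v₁⁻¹ := (units_conj_eq_mul_inv_div v₁ v₂ y).symm
  · calc
      u₂ * y * ↑u₂⁻¹ = ↑(u₁ / u₂)⁻¹ * (u₁ * y * ↑u₂⁻¹) := units_conj_eq_inv_div_mul u₁ u₂ y
      _ = ↑(v₁ / v₂)⁻¹ * (v₁ * y * ↑v₂⁻¹) := by rw [h, div_eq]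
      _ = v₂ * y * ↑v₂⁻¹ := (units_conj_eq_inv_div_mul v₁ v₂ y).symm

end UnitConjugation

/-- If two pairs of unit quaternions induce the same rotation `x ↦ u₁ x u₂⁻¹` of `ℍ`,
then the corresponding conjugations agree; this is the well-definedness underlying the
unique homomorphism `ϕ : SO(4) → SO(3) × SO(3)` with `ϕ ∘ φ = ψ × ψ`. -/
theorem phi_factors_through_psi (u₁ u₂ v₁ v₂ : Quaternion ℝ)
    (hu₁ : ‖u₁‖ = 1) (hu₂ : ‖u₂‖ = 1) (hv₁ : ‖v₁‖ = 1) (hv₂ : ‖v₂‖ = 1)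
    (h : ∀ x : Quaternion ℝ, u₁ * x * u₂⁻¹ = v₁ * x * v₂⁻¹) :
    (∀ y : Quaternion ℝ, u₁ * y * u₁⁻¹ = v₁ * y * v₁⁻¹) ∧
    (∀ y : Quaternion ℝ, u₂ * y * u₂⁻¹ = v₂ * y * v₂⁻¹) := by
  have ne_zero {u : Quaternion ℝ} (hu : ‖u‖ = 1) : u ≠ 0 := norm_ne_zero_iff.mp (hu ▸ one_ne_zero)
  exact phi_factors_through_psi_general (.mk0 u₁ (ne_zero hu₁)) (.mk0 u₂ (ne_zero hu₂))
    (.mk0 v₁ (ne_zero hv₁)) (.mk0 v₂ (ne_zero hv₂)) h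
end

section
/- Define the Hopf map on unit quaternions by h(x) = (conj x) * i * x. Then: (1) for every unit quaternion x, h(x) is a purely imaginary quaternion of norm 1; and (2) for every purely imaginary quaternion p with ‖p‖ = 1 there exists a unit quaternion x with h(x) = p. In other words, h maps the unit quaternions onto the unit sphere of the purely imaginary quaternions. -/
/-- The quaternion imaginary unit `i`. -/
def quaternionI : Quaternion ℝ := ⟨0, 1, 0, 0⟩

/-- The Hopf map `h(x) = (conj x) * i * x`. -/
noncomputable def hopfMap (x : Quaternion ℝ) : Quaternion ℝ := star x * quaternionI * x

/-!
The map `x ↦ star x * q * x` on unit quaternions preserves the real part and the norm. Conversely,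
suppose `p` and `q` agree in both. They are then roots of the same real quadratic, so
`a * p - star q * a` intertwines `p` and `q` for every `a`. If all of these vanish, `a = 1` gives
`p = star q`, hence `p` commutes with every `a`; so `p` is real, `p = q`, and `1` intertwines them.
A nonzero intertwiner normalized to length one carries `q` to `p`.
-/

open Quaternion

section CommRing

variable {R : Type*} [CommRing R]

theorem re_star_mul_mul_self (q x : ℍ[R]) : (star x * q * x).re = normSq x * q.re := by
  simp only [normSq_def', re_mul, imI_mul, imJ_mul, imK_mul, re_star, imI_star, imJ_star, imK_star]
  ring

theorem eq_coe_re_of_forall_commute [IsAddTorsionFree R] {q : ℍ[R]} (h : ∀ a, Commute q a) :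
    q = q.re := by
  have imJ_comm (a : ℍ[R]) : (q * a).imJ = (a * q).imJ := by rw [(h a).eq]
  have imK_comm (a : ℍ[R]) : (q * a).imK = (a * q).imK := by rw [(h a).eq]
  simp only [imJ_mul, imK_mul] at imJ_comm imK_comm
  have imI_eq_zero : q.imI = 0 := by simpa [self_eq_neg, neg_eq_self] using imK_comm ⟨0, 0, 1, 0⟩
  have imJ_eq_zero : q.imJ = 0 := by simpa [self_eq_neg, neg_eq_self] using imK_comm ⟨0, 1, 0, 0⟩
  have imK_eq_zero : q.imK = 0 := by simpa [self_eq_neg, neg_eq_self] using imJ_comm ⟨0, 1, 0, 0⟩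
  ext <;> simp [*]

theorem semiconjBy_mul_sub_star_mul {p q : ℍ[R]} (hre : p.re = q.re)
    (hnormSq : normSq p = normSq q) (a : ℍ[R]) : SemiconjBy (a * p - star q * a) p q := by
  have trace_eq : q * a + star q * a = a * p + a * star p := by
    rw [← add_mul, ← mul_add, self_add_star', self_add_star', hre, coe_commutes]
  have swap : a * p - star q * a = q * a - a * star p := by
    rw [sub_eq_sub_iff_add_eq_add, trace_eq]
  calc (a * p - star q * a) * p
      = q * a * p - a * (star p * p) := by rw [swap]; noncomm_ring
    _ = q * a * p - q * star q * a := by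
      rw [star_mul_self, self_mul_star, hnormSq, coe_commutes]
    _ = q * (a * p - star q * a) := by noncomm_ring

theorem exists_ne_zero_semiconjBy [Nontrivial R] [IsAddTorsionFree R] {p q : ℍ[R]}
    (hre : p.re = q.re) (hnormSq : normSq p = normSq q) : ∃ a ≠ 0, SemiconjBy a p q := by
  by_cases! h : ∃ a, a * p - star q * a ≠ 0
  · obtain ⟨a, ha⟩ := h
    exact ⟨_, ha, semiconjBy_mul_sub_star_mul hre hnormSq a⟩
  · have p_eq_star : p = star q := by simpa [sub_eq_zero] using h 1
    have p_real : p = p.re := eq_coe_re_of_forall_commute fun a ↦ by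
      rw [commute_iff_eq, eq_comm, ← sub_eq_zero]
      simpa only [← p_eq_star] using h a
    have star_p : star p = p := by rw [p_real, star_coe]
    have p_eq_q : p = q := by rw [← star_p, p_eq_star, star_star]
    exact ⟨1, one_ne_zero, p_eq_q ▸ SemiconjBy.one_left p⟩

theorem star_mul_mul_self_of_semiconjBy {a p q : ℍ[R]} (h : SemiconjBy a p q) :
    star a * q * a = normSq a • p := by
  rw [mul_assoc, ← h.eq, ← mul_assoc, star_mul_self, coe_mul_eq_smul]

end CommRing

theorem norm_star_mul_mul_self (q x : ℍ) : ‖star x * q * x‖ = ‖x‖ ^ 2 * ‖q‖ := by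
  rw [norm_mul, norm_mul, Quaternion.norm_star]
  ring

theorem exists_norm_eq_one_star_mul_mul_self_eq {p q : ℍ} (hre : p.re = q.re)
    (hnorm : ‖p‖ = ‖q‖) : ∃ x : ℍ, ‖x‖ = 1 ∧ star x * q * x = p := by
  have normSq_eq : normSq p = normSq q := by simp only [normSq_eq_norm_mul_self, hnorm]
  obtain ⟨a, a_ne_zero, ha⟩ := exists_ne_zero_semiconjBy hre normSq_eq
  have norm_eq_one : ‖(‖a‖⁻¹ • a)‖ = 1 := by
    rw [norm_smul, norm_inv, norm_norm, inv_mul_cancel₀ (norm_ne_zero_iff.mpr a_ne_zero)]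
  refine ⟨‖a‖⁻¹ • a, norm_eq_one, ?_⟩
  rw [star_mul_mul_self_of_semiconjBy (ha.smul_left _), normSq_eq_norm_mul_self, norm_eq_one,
    one_mul, one_smul]

theorem norm_quaternionI : ‖quaternionI‖ = 1 := by
  have h : ‖quaternionI‖ * ‖quaternionI‖ = 1 := by
    rw [← normSq_eq_norm_mul_self, normSq_def']
    simp [quaternionI]
  nlinarith [norm_nonneg quaternionI]

theorem hopfMap_onto_unit_imaginary_sphere_general (q : ℍ) :
    (∀ x : ℍ, ‖x‖ = 1 → (star x * q * x).re = q.re ∧ ‖star x * q * x‖ = ‖q‖) ∧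
    (∀ p : ℍ, p.re = q.re → ‖p‖ = ‖q‖ → ∃ x : ℍ, ‖x‖ = 1 ∧ star x * q * x = p) := by
  refine ⟨fun x hx ↦ ⟨?_, ?_⟩, fun _ ↦ exists_norm_eq_one_star_mul_mul_self_eq⟩
  · rw [re_star_mul_mul_self, normSq_eq_norm_mul_self, hx, one_mul, one_mul]
  · rw [norm_star_mul_mul_self, hx, one_pow, one_mul]

/-- The Hopf map sends every unit quaternion to a purely imaginary quaternion of
norm `1`, and every purely imaginary quaternion of norm `1` arises this way: `h` maps
the unit quaternions onto the unit sphere of the purely imaginary quaternions. -/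
theorem hopfMap_onto_unit_imaginary_sphere :
    (∀ x : Quaternion ℝ, ‖x‖ = 1 → (hopfMap x).re = 0 ∧ ‖hopfMap x‖ = 1) ∧
    (∀ p : Quaternion ℝ, p.re = 0 → ‖p‖ = 1 →
      ∃ x : Quaternion ℝ, ‖x‖ = 1 ∧ hopfMap x = p) := by
  have general := hopfMap_onto_unit_imaginary_sphere_general quaternionI
  rwa [norm_quaternionI] at general
end

section
/- Let x and y be unit quaternions and define the Hopf map h(x) = (conj x) * i * x. Then h(x) = h(y) if and only if there exist real numbers a, b with a² + b² = 1 such that y = (a + b·i) * x. That is, the fibers of the Hopf map are exactly the orbits of the left multiplication action of the circle of unit complex numbers {a + b·i : a² + b² = 1} on the unit quaternions. -/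
/-!
Taking norms in `h(x) = h(y)` gives `‖x‖² = ‖y‖²`, so that `y = u * x` for some unit quaternion `u`.
Since `h(u * x) = conj x * (conj u * i * u) * x` and `conj u = u⁻¹`, for `x ≠ 0` the two values
agree exactly when `u` commutes with `i`, and the quaternions commuting with `i` are the `a + b·i`.
-/

open Quaternion

section Conjugation

variable {R : Type*}

lemma mem_unitary_iff_normSq_eq_one [CommRing R] {u : ℍ[R]} :
    u ∈ unitary ℍ[R] ↔ normSq u = 1 := by
  rw [Unitary.mem_iff, star_mul_self, self_mul_star, and_self, ← coe_one, coe_inj]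

variable [Field R] [LinearOrder R] [IsStrictOrderedRing R]

lemma normSq_eq_of_star_mul_mul_self_eq {c x y : ℍ[R]} (hc : c ≠ 0)
    (h : star x * c * x = star y * c * y) : normSq x = normSq y := by
  have normSq_conj (z : ℍ[R]) : normSq (star z * c * z) = normSq z ^ 2 * normSq c := by
    rw [map_mul, map_mul, normSq_star]
    ring
  have hsq : normSq x ^ 2 = normSq y ^ 2 :=
    mul_right_cancel₀ (normSq_ne_zero.mpr hc) <| by rw [← normSq_conj, h, normSq_conj]
  exact (sq_eq_sq₀ normSq_nonneg normSq_nonneg).mp hsq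

theorem star_mul_mul_self_eq_iff_exists_commute {c : ℍ[R]} (hc : c ≠ 0) (x y : ℍ[R]) :
    star x * c * x = star y * c * y ↔ ∃ u ∈ unitary ℍ[R], Commute u c ∧ y = u * x := by
  have conj_mul (u : ℍ[R]) :
      star (u * x) * c * (u * x) = star x * (star u * c * u) * x := by
    simp only [star_mul, mul_assoc]
  constructor
  · intro h
    have hnorm : normSq x = normSq y := normSq_eq_of_star_mul_mul_self_eq hc h
    obtain rfl | hx := eq_or_ne x 0
    · have hy : y = 0 := by rw [← normSq_eq_zero, ← hnorm, map_zero]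
      exact ⟨1, one_mem _, Commute.one_left c, by rw [mul_zero, hy]⟩
    · obtain ⟨u, rfl⟩ : ∃ u, y = u * x := ⟨y / x, (div_mul_cancel₀ y hx).symm⟩
      have hu : u ∈ unitary ℍ[R] := by
        rw [map_mul, right_eq_mul₀ (normSq_ne_zero.mpr hx)] at hnorm
        exact mem_unitary_iff_normSq_eq_one.mpr hnorm
      have hconj : c = star u * c * u := by
        rw [conj_mul] at h
        exact mul_left_cancel₀ (star_ne_zero.mpr hx) (mul_right_cancel₀ hx h)
      exact ⟨u, hu, (commute_unitary_iff_star_left_conjugate hu).mpr hconj.symm, rfl⟩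
  · rintro ⟨u, hu, hcomm, rfl⟩
    rw [conj_mul, (commute_unitary_iff_star_left_conjugate hu).mp hcomm]

end Conjugation

@[simp] lemma re_quaternionI : quaternionI.re = 0 := rfl

@[simp] lemma imI_quaternionI : quaternionI.imI = 1 := rfl

@[simp] lemma imJ_quaternionI : quaternionI.imJ = 0 := rfl

@[simp] lemma imK_quaternionI : quaternionI.imK = 0 := rfl

lemma quaternionI_ne_zero : quaternionI ≠ 0 :=
  fun h ↦ one_ne_zero (congrArg (·.imI) h)

lemma commute_quaternionI_iff {u : ℍ} :
    Commute u quaternionI ↔ ∃ a b : ℝ, u = a + b • quaternionI := by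
  constructor
  · intro h
    have himK : u.imK = -u.imK := by simpa using congrArg (·.imJ) h.eq
    have himJ : -u.imJ = u.imJ := by simpa using congrArg (·.imK) h.eq
    refine ⟨u.re, u.imI, ?_⟩
    ext <;> simp [neg_eq_self.mp himJ, self_eq_neg.mp himK]
  · rintro ⟨a, b, rfl⟩
    exact (coe_commute a _).add_left ((Commute.refl quaternionI).smul_left b)

lemma coe_add_smul_quaternionI_mem_unitary_iff (a b : ℝ) :
    (a : ℍ) + b • quaternionI ∈ unitary ℍ ↔ a ^ 2 + b ^ 2 = 1 := by
  simp [mem_unitary_iff_normSq_eq_one, normSq_def']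

theorem hopfMap_fibers_general (x y : Quaternion ℝ) :
    hopfMap x = hopfMap y ↔
      ∃ a b : ℝ, a ^ 2 + b ^ 2 = 1 ∧ y = ((a : Quaternion ℝ) + b • quaternionI) * x := by
  unfold hopfMap
  rw [star_mul_mul_self_eq_iff_exists_commute quaternionI_ne_zero]
  simp only [commute_quaternionI_iff, ← coe_add_smul_quaternionI_mem_unitary_iff]
  constructor
  · rintro ⟨_, hu, ⟨a, b, rfl⟩, hy⟩
    exact ⟨a, b, hu, hy⟩
  · rintro ⟨a, b, hu, hy⟩
    exact ⟨_, hu, ⟨a, b, rfl⟩, hy⟩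

/-- Two unit quaternions have the same image under the Hopf map iff they lie in the
same orbit of the left-multiplication action of the circle `{a + b·i : a² + b² = 1}`. -/
theorem hopfMap_fibers (x y : Quaternion ℝ) (hx : ‖x‖ = 1) (hy : ‖y‖ = 1) :
    hopfMap x = hopfMap y ↔
      ∃ a b : ℝ, a ^ 2 + b ^ 2 = 1 ∧
        y = ((a : Quaternion ℝ) + b • quaternionI) * x :=
  hopfMap_fibers_general x y
end
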